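/- For every τ in the complex upper half-plane, c(τ)² + 2·c(τ)·c(2τ)² = c(2τ); i.e., the functions u = c(τ) and v = c(2τ) satisfy the modular relation u² + 2uv² − v = 0. -/

import Mathlib

open Complex

/-- The nome `q = exp(2πiτ)`. -/
noncomputable def nome (τ : ℂ) : ℂ := Complex.exp (2 * Real.pi * I * τ)

/-- Ramanujan's cubic continued fraction, as an infinite product:
`c(τ) = q^{1/3} ∏_{n≥1} (1-q^{6n-1})(1-q^{6n-5})/(1-q^{6n-3})²`. -/
noncomputable def c (τ : ℂ) : ℂ :=
  Complex.exp (2 * Real.pi * I * τ / 3) *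
    ∏' n : ℕ,
      ((1 - nome τ ^ (6 * (n + 1) - 1)) * (1 - nome τ ^ (6 * (n + 1) - 5)) /
        (1 - nome τ ^ (6 * (n + 1) - 3)) ^ 2)

open Filter Topology Finset

/-- The infinite product `∏_{k ≥ 0} (1 + a q^k)`. -/
noncomputable def qProd (a q : ℂ) : ℂ := ∏' k : ℕ, (1 + a * q ^ k)

theorem summable_norm_mul_pow (a : ℂ) {q : ℂ} (hq : ‖q‖ < 1) :
    Summable fun k : ℕ => ‖a * q ^ k‖ := by
  simp only [norm_mul, norm_pow]
  exact (summable_geometric_of_lt_one (norm_nonneg _) hq).mul_left _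

theorem hasProd_qProd (a : ℂ) {q : ℂ} (hq : ‖q‖ < 1) :
    HasProd (fun k : ℕ => 1 + a * q ^ k) (qProd a q) :=
  (multipliable_one_add_of_summable (summable_norm_mul_pow a hq)).hasProd

theorem norm_pow_lt_one {q : ℂ} (hq : ‖q‖ < 1) {n : ℕ} (hn : n ≠ 0) : ‖q ^ n‖ < 1 := by
  rw [norm_pow]; exact pow_lt_one₀ (norm_nonneg _) hq hn

theorem one_add_ne_zero_of_norm_lt {a : ℂ} (ha : ‖a‖ < 1) : 1 + a ≠ 0 := by
  intro h
  have : a = -1 := by linear_combination h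
  simp [this] at ha

theorem qProd_ne_zero {a q : ℂ} (hq : ‖q‖ < 1) (ha : ‖a‖ < 1) : qProd a q ≠ 0 := by
  refine tprod_one_add_ne_zero_of_summable (fun k => one_add_ne_zero_of_norm_lt ?_)
    (summable_norm_mul_pow a hq)
  rw [norm_mul, norm_pow]
  exact (mul_le_of_le_one_right (norm_nonneg _) (pow_le_one₀ (norm_nonneg _) hq.le)).trans_lt ha

theorem qProd_split (a : ℂ) {q : ℂ} (hq : ‖q‖ < 1) :
    qProd a q = qProd a (q ^ 2) * qProd (a * q) (q ^ 2) := by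
  have hq2 := norm_pow_lt_one hq two_ne_zero
  refine (hasProd_qProd a hq).unique (HasProd.even_mul_odd ?_ ?_)
  · simpa [pow_mul] using hasProd_qProd a hq2
  · convert hasProd_qProd (a * q) hq2 using 2 with k
    ring

theorem qProd_mul_neg (a : ℂ) {q : ℂ} (hq : ‖q‖ < 1) :
    qProd a q * qProd (-a) q = qProd (-a ^ 2) (q ^ 2) := by
  have h := (hasProd_qProd a hq).mul (hasProd_qProd (-a) hq)
  refine h.unique ?_
  convert hasProd_qProd (-a ^ 2) (norm_pow_lt_one hq two_ne_zero) using 2 with k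
  ring

theorem qProd_head (a : ℂ) {q : ℂ} (hq : ‖q‖ < 1) :
    qProd a q = (1 + a) * qProd (a * q) q := by
  have h := hasProd_qProd (a * q) hq
  have h' : HasProd (fun k : ℕ => 1 + a * q ^ (k + 1)) (qProd (a * q) q) := by
    convert h using 2 with k
    ring
  simpa using (hasProd_qProd a hq).unique h'.zero_mul

/-- Euler: `(-q; q) (q; q²) = 1`. -/
theorem qProd_euler {q : ℂ} (hq : ‖q‖ < 1) : qProd q q * qProd (-q) (q ^ 2) = 1 := by
  have hq2 := norm_pow_lt_one hq two_ne_zero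
  have h1 := qProd_mul_neg q hq
  have h2 := qProd_split (-q) hq
  have h3 : qProd (-q ^ 2) (q ^ 2) ≠ 0 := qProd_ne_zero hq2 (by simpa using hq2)
  rw [h2, show -q * q = -q ^ 2 by ring] at h1
  apply mul_right_cancel₀ h3
  linear_combination h1

/-- The reciprocal `1 / (Q; Q)_m`, extended by zero to negative `m`. -/
noncomputable def invQFactorial (Q : ℂ) (m : ℤ) : ℂ :=
  if m < 0 then 0 else (∏ k ∈ range m.toNat, (1 - Q ^ (k + 1)))⁻¹

theorem one_sub_pow_ne_zero {Q : ℂ} (hQ : ‖Q‖ < 1) (k : ℕ) : 1 - Q ^ (k + 1) ≠ 0 := by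
  have := norm_pow_lt_one hQ k.succ_ne_zero
  simpa [sub_eq_add_neg] using one_add_ne_zero_of_norm_lt (a := -Q ^ (k + 1)) (by simpa using this)

theorem invQFactorial_sub_one {Q : ℂ} (hQ : ‖Q‖ < 1) (m : ℤ) :
    invQFactorial Q (m - 1) = invQFactorial Q m * (1 - Q ^ m) := by
  rcases lt_trichotomy m 0 with h | rfl | h
  · simp [invQFactorial, h, show m - 1 < 0 by omega]
  · simp [invQFactorial]
  · obtain ⟨n, rfl⟩ : ∃ n : ℕ, m = n + 1 := ⟨(m - 1).toNat, by omega⟩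
    have h1 : ¬ ((n : ℤ) + 1 < 0) := by omega
    have h2 : ((n : ℤ) + 1).toNat = n + 1 := by omega
    have h3 := one_sub_pow_ne_zero hQ n
    have h4 : Q ^ ((n : ℤ) + 1) = Q ^ (n + 1) := by exact_mod_cast zpow_natCast Q (n + 1)
    simp only [invQFactorial, add_sub_cancel_right, h1, h2, prod_range_succ, h4, if_false,
      show ¬ ((n : ℤ) < 0) by omega, Int.toNat_natCast]
    field_simp

theorem tendsto_qFactorial {Q : ℂ} (hQ : ‖Q‖ < 1) :
    Tendsto (fun n => ∏ k ∈ range n, (1 - Q ^ (k + 1))) atTop (𝓝 (qProd (-Q) Q)) := by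
  convert (hasProd_qProd (-Q) hQ).tendsto_prod_nat using 4 with n k
  ring

theorem qFactorial_limit_ne_zero {Q : ℂ} (hQ : ‖Q‖ < 1) : qProd (-Q) Q ≠ 0 :=
  qProd_ne_zero hQ (by simpa using hQ)

theorem tendsto_invQFactorial {Q : ℂ} (hQ : ‖Q‖ < 1) :
    Tendsto (invQFactorial Q) atTop (𝓝 (qProd (-Q) Q)⁻¹) := by
  have h := ((tendsto_qFactorial hQ).inv₀ (qFactorial_limit_ne_zero hQ)).comp
    (tendsto_atTop_atTop.2 fun b => ⟨(b : ℤ), fun a ha => by omega⟩ :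
      Tendsto Int.toNat atTop atTop)
  refine h.congr' ?_
  filter_upwards [eventually_ge_atTop 0] with m hm
  simp [invQFactorial, not_lt.2 hm]

theorem exists_norm_invQFactorial_le {Q : ℂ} (hQ : ‖Q‖ < 1) :
    ∃ C, ∀ m, ‖invQFactorial Q m‖ ≤ C := by
  have h := (tendsto_qFactorial hQ).inv₀ (qFactorial_limit_ne_zero hQ)
  obtain ⟨C, hC⟩ := (Metric.isBounded_range_of_tendsto _ h).exists_norm_le
  refine ⟨C, fun m => ?_⟩
  have h0 := (norm_nonneg _).trans (hC _ ⟨0, rfl⟩)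
  unfold invQFactorial
  split_ifs
  · simpa using h0
  · exact hC _ ⟨_, rfl⟩

theorem finite_jacobi_recurrence {q z : ℂ} (hq0 : q ≠ 0) (hq : ‖q‖ < 1) (hz : z ≠ 0) (n : ℕ)
    (j : ℤ) (F : ℤ → ℂ)
    (hF : ∀ j, F j = invQFactorial (q ^ 2) (n - j) * invQFactorial (q ^ 2) (n + j) *
      (q ^ (j ^ 2) * z ^ j)) :
    (1 - (q ^ 2) ^ (2 * n + 1)) * (1 - (q ^ 2) ^ (2 * n + 2)) *
      (invQFactorial (q ^ 2) (n + 1 - j) * invQFactorial (q ^ 2) (n + 1 + j) *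
        (q ^ (j ^ 2) * z ^ j)) =
    (1 + q ^ (4 * n + 2)) * F j + q ^ (2 * n + 1) * z * F (j - 1) +
      q ^ (2 * n + 1) * z⁻¹ * F (j + 1) := by
  have hQ := norm_pow_lt_one hq two_ne_zero
  have e1 := invQFactorial_sub_one hQ (n + 1 - j)
  have e2 := invQFactorial_sub_one hQ (n - j)
  have e3 := invQFactorial_sub_one hQ (n + 1 + j)
  have e4 := invQFactorial_sub_one hQ (n + j)
  rw [show (n : ℤ) + 1 - j - 1 = n - j by ring] at e1
  rw [show (n : ℤ) + 1 + j - 1 = n + j by ring] at e3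
  rw [hF, hF, hF, show (n : ℤ) - (j - 1) = n + 1 - j by ring,
    show (n : ℤ) + (j - 1) = n + j - 1 by ring, show (n : ℤ) - (j + 1) = n - j - 1 by ring,
    show (n : ℤ) + (j + 1) = n + 1 + j by ring, e2, e4, e1, e3]
  have hs : q ^ j ≠ 0 := zpow_ne_zero _ hq0
  have k1 : q ^ ((j - 1) ^ 2) = q ^ (j ^ 2) * q / (q ^ j) ^ 2 := by
    rw [show (j - 1) ^ 2 = j ^ 2 + 1 - j - j by ring, zpow_sub₀ hq0, zpow_sub₀ hq0, zpow_add₀ hq0,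
      zpow_one]
    field_simp
  have k2 : q ^ ((j + 1) ^ 2) = q ^ (j ^ 2) * q * (q ^ j) ^ 2 := by
    rw [show (j + 1) ^ 2 = j ^ 2 + 1 + j + j by ring, zpow_add₀ hq0, zpow_add₀ hq0, zpow_add₀ hq0,
      zpow_one]
    ring
  have hQj : (q ^ 2) ^ j = (q ^ j) ^ 2 := by
    rw [← zpow_natCast q 2, ← zpow_natCast (q ^ j) 2, zpow_comm]
  have hq20 : q ^ 2 ≠ 0 := pow_ne_zero _ hq0
  rw [k1, k2, zpow_sub₀ hz, zpow_add₀ hz, zpow_sub₀ hq20, zpow_sub₀ hq20, zpow_add₀ hq20,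
    zpow_add₀ hq20 (n + 1 : ℤ) j, zpow_add₀ hq20 (n : ℤ) 1, zpow_add₀ hq20 (n : ℤ) j, hQj]
  simp only [zpow_one, zpow_natCast]
  have hz' : z ^ j ≠ 0 := zpow_ne_zero _ hz
  have hj2 : q ^ (j ^ 2) ≠ 0 := zpow_ne_zero _ hq0
  generalize q ^ (j ^ 2) = a at *
  generalize q ^ j = s at *
  generalize z ^ j = w at *
  generalize invQFactorial (q ^ 2) _ = B
  generalize invQFactorial (q ^ 2) _ = C
  have g1 : (q ^ 2) ^ n = (q ^ n) ^ 2 := by rw [← pow_mul, ← pow_mul, mul_comm]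
  have g2 : (q ^ 2) ^ (2 * n + 1) = (q ^ n) ^ 4 * q ^ 2 := by ring
  have g3 : (q ^ 2) ^ (2 * n + 2) = (q ^ n) ^ 4 * q ^ 4 := by ring
  have g4 : q ^ (4 * n + 2) = (q ^ n) ^ 4 * q ^ 2 := by ring
  have g5 : q ^ (2 * n + 1) = (q ^ n) ^ 2 * q := by ring
  rw [g1, g2, g3, g4, g5]
  generalize q ^ n = N
  field_simp
  ring

theorem HasSum.congr_eq {f g : ℤ → ℂ} {a b : ℂ} (hfg : f = g) (hab : a = b) (h : HasSum g b) :
    HasSum f a := hfg ▸ hab ▸ h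

theorem finite_jacobi {q z : ℂ} (hq0 : q ≠ 0) (hq : ‖q‖ < 1) (hz : z ≠ 0) (n : ℕ) :
    HasSum (fun j : ℤ => (∏ k ∈ range (2 * n), (1 - (q ^ 2) ^ (k + 1))) *
      (invQFactorial (q ^ 2) (n - j) * invQFactorial (q ^ 2) (n + j) * (q ^ (j ^ 2) * z ^ j)))
      (∏ k ∈ range n, ((1 + z * q * (q ^ 2) ^ k) * (1 + z⁻¹ * q * (q ^ 2) ^ k))) := by
  induction n with
  | zero =>
    convert hasSum_single (0 : ℤ) ?_ using 1
    · simp [invQFactorial]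
    · intro j hj
      rcases lt_or_gt_of_ne hj with h | h <;> simp [invQFactorial, h]
  | succ n ih =>
    set D := ∏ k ∈ range (2 * n), (1 - (q ^ 2) ^ (k + 1))
    set F : ℤ → ℂ := fun j => invQFactorial (q ^ 2) (n - j) * invQFactorial (q ^ 2) (n + j) *
      (q ^ (j ^ 2) * z ^ j)
    have s1 := (Equiv.subRight (1 : ℤ)).hasSum_iff.2 ih
    have s2 := (Equiv.addRight (1 : ℤ)).hasSum_iff.2 ih
    have h := ((ih.mul_left (1 + q ^ (4 * n + 2))).add (s1.mul_left (q ^ (2 * n + 1) * z))).add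
      (s2.mul_left (q ^ (2 * n + 1) * z⁻¹))
    refine HasSum.congr_eq (funext fun j => ?_) ?_ h
    · have := finite_jacobi_recurrence hq0 hq hz n j F (fun _ => rfl)
      rw [show 2 * (n + 1) = 2 * n + 1 + 1 by ring, prod_range_succ, prod_range_succ]
      push_cast
      simp only [Function.comp, Equiv.subRight_apply, Equiv.coe_addRight]
      linear_combination D * this
    · rw [prod_range_succ]
      have g1 : (q ^ 2) ^ n = (q ^ n) ^ 2 := by rw [← pow_mul, ← pow_mul, mul_comm]
      have g4 : q ^ (4 * n + 2) = (q ^ n) ^ 4 * q ^ 2 := by ring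
      have g5 : q ^ (2 * n + 1) = (q ^ n) ^ 2 * q := by ring
      rw [g1, g4, g5]
      field_simp
      ring

theorem summable_theta {q z : ℂ} (hq0 : q ≠ 0) (hq : ‖q‖ < 1) (hz : z ≠ 0) :
    Summable fun j : ℤ => q ^ (j ^ 2) * z ^ j := by
  have hpi : (Real.pi : ℂ) ≠ 0 := by exact_mod_cast Real.pi_ne_zero
  have h := (summable_jacobiTheta₂_term_iff (Complex.log z / (2 * Real.pi * I))
    (Complex.log q / (Real.pi * I))).2 (by
      have : (Complex.log q / (Real.pi * I)) = (-(Complex.log q) / Real.pi) * I := by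
        field_simp
        rw [I_sq]; ring
      rw [this, Complex.mul_I_im, Complex.div_ofReal_re, Complex.neg_re, Complex.log_re]
      have := Real.log_neg (norm_pos_iff.2 hq0) hq
      have := Real.pi_pos
      apply div_pos <;> linarith)
  refine h.congr fun j => ?_
  rw [jacobiTheta₂_term, show 2 * Real.pi * I * j * (Complex.log z / (2 * Real.pi * I)) +
    Real.pi * I * j ^ 2 * (Complex.log q / (Real.pi * I)) =
    ((j ^ 2 : ℤ) : ℂ) * Complex.log q + j * Complex.log z by field_simp; push_cast; ring,
    Complex.exp_add, Complex.exp_int_mul, Complex.exp_int_mul, Complex.exp_log hq0,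
    Complex.exp_log hz]

/-- The theta series `∑_{j ∈ ℤ} q^(j²) z^j`. -/
noncomputable def thetaSeries (q z : ℂ) : ℂ := ∑' j : ℤ, q ^ (j ^ 2) * z ^ j

theorem hasSum_thetaSeries {q z : ℂ} (hq0 : q ≠ 0) (hq : ‖q‖ < 1) (hz : z ≠ 0) :
    HasSum (fun j : ℤ => q ^ (j ^ 2) * z ^ j) (thetaSeries q z) :=
  (summable_theta hq0 hq hz).hasSum

/-- The Jacobi triple product identity. -/
theorem thetaSeries_eq_prod {q z : ℂ} (hq0 : q ≠ 0) (hq : ‖q‖ < 1) (hz : z ≠ 0) :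
    thetaSeries q z =
      qProd (-q ^ 2) (q ^ 2) * (qProd (z * q) (q ^ 2) * qProd (z⁻¹ * q) (q ^ 2)) := by
  have hQ := norm_pow_lt_one hq two_ne_zero
  have hne := qFactorial_limit_ne_zero hQ
  have hprod : Tendsto
      (fun n => ∏ k ∈ range n, ((1 + z * q * (q ^ 2) ^ k) * (1 + z⁻¹ * q * (q ^ 2) ^ k))) atTop
      (𝓝 (qProd (z * q) (q ^ 2) * qProd (z⁻¹ * q) (q ^ 2))) :=
    ((hasProd_qProd (z * q) hQ).mul (hasProd_qProd (z⁻¹ * q) hQ)).tendsto_prod_nat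
  have hD : Tendsto (fun n : ℕ => ∏ k ∈ range (2 * n), (1 - (q ^ 2) ^ (k + 1))) atTop
      (𝓝 (qProd (-q ^ 2) (q ^ 2))) :=
    (tendsto_qFactorial hQ).comp (tendsto_id.const_mul_atTop' two_pos)
  obtain ⟨C, hC⟩ := exists_norm_invQFactorial_le hQ
  obtain ⟨D, hDb⟩ := (Metric.isBounded_range_of_tendsto _ hD).exists_norm_le
  have hC0 : 0 ≤ C := (norm_nonneg _).trans (hC 0)
  have hD0 : 0 ≤ D := (norm_nonneg _).trans (hDb _ ⟨0, rfl⟩)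
  have hlim := tendsto_tsum_of_dominated_convergence (𝓕 := atTop)
    (f := fun (n : ℕ) (j : ℤ) => (∏ k ∈ range (2 * n), (1 - (q ^ 2) ^ (k + 1))) *
      (invQFactorial (q ^ 2) (n - j) * invQFactorial (q ^ 2) (n + j) * (q ^ (j ^ 2) * z ^ j)))
    (g := fun j : ℤ => qProd (-q ^ 2) (q ^ 2) * ((qProd (-q ^ 2) (q ^ 2))⁻¹ *
      (qProd (-q ^ 2) (q ^ 2))⁻¹ * (q ^ (j ^ 2) * z ^ j)))
    (bound := fun j : ℤ => D * (C * C * ‖q ^ (j ^ 2) * z ^ j‖))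
    (((summable_theta hq0 hq hz).norm.mul_left _).mul_left _)
    (fun j => by
      have hcast : Tendsto (fun n : ℕ => (n : ℤ)) atTop atTop := tendsto_natCast_atTop_atTop
      have t1 : Tendsto (fun n : ℕ => (n : ℤ) - j) atTop atTop :=
        tendsto_atTop_add_const_right _ (-j) hcast
      have t2 : Tendsto (fun n : ℕ => (n : ℤ) + j) atTop atTop :=
        tendsto_atTop_add_const_right _ j hcast
      exact hD.mul ((((tendsto_invQFactorial hQ).comp t1).mul
        ((tendsto_invQFactorial hQ).comp t2)).mul_const _))
    (Eventually.of_forall fun n j => by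
      rw [norm_mul, norm_mul, norm_mul (invQFactorial _ _)]
      have := hDb _ ⟨n, rfl⟩
      gcongr
      exacts [hC _, hC _])
  have := tendsto_nhds_unique hlim
    (hprod.congr fun n => ((finite_jacobi hq0 hq hz n).tsum_eq).symm)
  rw [tsum_mul_left, tsum_mul_left] at this
  rw [← this, thetaSeries]
  field_simp

theorem thetaSeries_self {q : ℂ} (hq0 : q ≠ 0) (hq : ‖q‖ < 1) :
    thetaSeries q q = 2 * qProd (-q ^ 2) (q ^ 2) * qProd (q ^ 2) (q ^ 2) ^ 2 := by
  have h := qProd_head 1 (norm_pow_lt_one hq two_ne_zero)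
  rw [one_mul] at h
  rw [thetaSeries_eq_prod hq0 hq hq0, inv_mul_cancel₀ hq0, h, ← sq q]
  ring

theorem thetaSeries_one {q : ℂ} (hq0 : q ≠ 0) (hq : ‖q‖ < 1) :
    thetaSeries q 1 = qProd (-q ^ 2) (q ^ 2) * qProd q (q ^ 2) ^ 2 := by
  rw [thetaSeries_eq_prod hq0 hq one_ne_zero, inv_one, one_mul]
  ring

theorem thetaSeries_self_ne_zero {q : ℂ} (hq0 : q ≠ 0) (hq : ‖q‖ < 1) :
    thetaSeries q q ≠ 0 := by
  have hQ := norm_pow_lt_one hq two_ne_zero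
  rw [thetaSeries_self hq0 hq]
  exact mul_ne_zero (mul_ne_zero two_ne_zero (qFactorial_limit_ne_zero hQ))
    (pow_ne_zero _ (qProd_ne_zero hQ hQ))

theorem thetaSeries_one_ne_zero {q : ℂ} (hq0 : q ≠ 0) (hq : ‖q‖ < 1) :
    thetaSeries q 1 ≠ 0 := by
  have hQ := norm_pow_lt_one hq two_ne_zero
  rw [thetaSeries_one hq0 hq]
  exact mul_ne_zero (qFactorial_limit_ne_zero hQ) (pow_ne_zero _ (qProd_ne_zero hQ hq))

/-- In the classical notation, `φ(s²) ψ(s⁴) = ψ(s²)²`. -/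
theorem two_mul_thetaSeries_one_mul_self {s : ℂ} (hs0 : s ≠ 0) (hs : ‖s‖ < 1) :
    2 * thetaSeries (s ^ 2) 1 * thetaSeries (s ^ 2) (s ^ 2) = thetaSeries s s ^ 2 := by
  have hy0 := pow_ne_zero 2 hs0
  have hy := norm_pow_lt_one hs two_ne_zero
  rw [thetaSeries_one hy0 hy, thetaSeries_self hy0 hy, thetaSeries_self hs0 hs]
  have h1 := qProd_split (s ^ 2) hy
  have h2 := qProd_mul_neg (s ^ 2) hy
  rw [← sq] at h1
  rw [← h2, h1]
  ring

theorem tsum_int_eq_three {f : ℤ → ℂ} (hf : Summable f) :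
    ∑' n, f n = ∑' m : ℤ, f (3 * m) + ∑' m : ℤ, f (3 * m + 1) + ∑' m : ℤ, f (-3 * m - 1) := by
  have hs : ∀ r : ℤ, Summable fun m : ℤ => f (3 * m + r) := fun r =>
    hf.comp_injective fun a b h => by simpa using h
  have h2 : ∑' m : ℤ, f (-3 * m - 1) = ∑' m : ℤ, f (3 * m + 2) := by
    rw [← (Equiv.subLeft (-1 : ℤ)).tsum_eq fun m => f (3 * m + 2)]
    refine tsum_congr fun m => congrArg f ?_
    simp only [Equiv.subLeft_apply]
    ring
  have h0 := hs 0
  simp only [add_zero] at h0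
  rw [h2, ← h0.tsum_add (hs 1), ← (h0.add (hs 1)).tsum_add (hs 2),
    ← (Int.divModEquiv 3).symm.tsum_eq f,
    Summable.tsum_prod (f := fun p => f ((Int.divModEquiv 3).symm p))
      ((Int.divModEquiv 3).symm.summable_iff.2 hf)]
  refine tsum_congr fun m => ?_
  rw [tsum_fintype, Fin.sum_univ_three]
  simp [Int.divModEquiv, mul_comm]

theorem pow_zpow (y : ℂ) (n : ℕ) (k : ℤ) : (y ^ n) ^ k = y ^ (n * k) := by
  rw [← zpow_natCast, ← zpow_mul]

/-- The 3-dissection of `φ`. -/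
theorem thetaSeries_one_dissection {y : ℂ} (hy0 : y ≠ 0) (hy : ‖y‖ < 1) :
    thetaSeries y 1 = thetaSeries (y ^ 9) 1 + 2 * y * thetaSeries (y ^ 9) (y ^ 6) := by
  rw [thetaSeries, tsum_int_eq_three (summable_theta hy0 hy one_ne_zero), thetaSeries,
    thetaSeries, mul_assoc, two_mul, ← tsum_mul_left, ← add_assoc]
  simp only [one_zpow, mul_one, pow_zpow]
  congr 1
  · congr 1
    · exact tsum_congr fun m => by congr 1; push_cast; ring
    · refine tsum_congr fun m => ?_
      rw [← zpow_add₀ hy0, ← zpow_one_add₀ hy0]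
      congr 1; push_cast; ring
  · refine tsum_congr fun m => ?_
    rw [← zpow_add₀ hy0, ← zpow_one_add₀ hy0]
    congr 1; push_cast; ring

/-- The 3-dissection of `ψ`. -/
theorem thetaSeries_self_dissection {s : ℂ} (hs0 : s ≠ 0) (hs : ‖s‖ < 1) :
    thetaSeries s s = s ^ 2 * thetaSeries (s ^ 9) (s ^ 9) + 2 * thetaSeries (s ^ 9) (s ^ 3) := by
  rw [thetaSeries, tsum_int_eq_three (summable_theta hs0 hs hs0), thetaSeries,
    thetaSeries, two_mul, ← tsum_mul_left, ← add_assoc, add_comm (∑' m : ℤ, _)]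
  simp only [pow_zpow, ← zpow_natCast s 2, ← zpow_add₀ hs0]
  congr 1
  · congr 1
    · exact tsum_congr fun m => by congr 1; push_cast; ring
    · exact tsum_congr fun m => by congr 1; push_cast; ring
  · exact tsum_congr fun m => by congr 1; push_cast; ring

/-- The product `∏_{n ≥ 1} (1 - t^(6n-1)) (1 - t^(6n-5)) / (1 - t^(6n-3))²`. -/
noncomputable def cubicProd (t : ℂ) : ℂ :=
  qProd (-t ^ 5) (t ^ 6) * qProd (-t) (t ^ 6) / qProd (-t ^ 3) (t ^ 6) ^ 2

theorem cubicProd_denom_ne_zero {t : ℂ} (ht : ‖t‖ < 1) : qProd (-t ^ 3) (t ^ 6) ≠ 0 :=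
  qProd_ne_zero (norm_pow_lt_one ht (by norm_num))
    (by simpa using norm_pow_lt_one ht three_ne_zero)

theorem cubicProd_ne_zero {t : ℂ} (ht : ‖t‖ < 1) : cubicProd t ≠ 0 := by
  have h6 : ‖t ^ 6‖ < 1 := norm_pow_lt_one ht (by norm_num)
  have h5 : ‖t ^ 5‖ < 1 := norm_pow_lt_one ht (by norm_num)
  exact div_ne_zero (mul_ne_zero (qProd_ne_zero h6 (by simpa using h5))
    (qProd_ne_zero h6 (by simpa using ht))) (pow_ne_zero _ (cubicProd_denom_ne_zero ht))

theorem c_eq_cubicProd (τ : ℂ) (h : ‖nome τ‖ < 1) :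
    c τ = Complex.exp (2 * Real.pi * I * τ / 3) * cubicProd (nome τ) := by
  have h6 : ‖nome τ ^ 6‖ < 1 := norm_pow_lt_one h (by norm_num)
  have h3 := hasProd_qProd (-nome τ ^ 3) h6
  have := ((hasProd_qProd (-nome τ ^ 5) h6).mul (hasProd_qProd (-nome τ) h6)).div₀
    (h3.mul h3) (mul_ne_zero (cubicProd_denom_ne_zero h) (cubicProd_denom_ne_zero h))
  rw [c, cubicProd, sq, ← this.tprod_eq]
  congr 1
  refine tprod_congr fun n => ?_
  rw [show 6 * (n + 1) - 1 = 6 * n + 5 by omega, show 6 * (n + 1) - 5 = 6 * n + 1 by omega,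
    show 6 * (n + 1) - 3 = 6 * n + 3 by omega]
  congr 1 <;> ring

theorem cubicProd_mul_neg {t : ℂ} (ht : ‖t‖ < 1) :
    cubicProd t * cubicProd (-t) = cubicProd (t ^ 2) := by
  have h6 : ‖t ^ 6‖ < 1 := norm_pow_lt_one ht (by norm_num)
  have e1 := qProd_mul_neg (t ^ 5) h6
  have e2 := qProd_mul_neg t h6
  have e3 := qProd_mul_neg (t ^ 3) h6
  simp only [cubicProd, neg_neg, show (-t) ^ 6 = t ^ 6 by ring, show -(-t) ^ 5 = t ^ 5 by ring,
    show -(-t) ^ 3 = t ^ 3 by ring]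
  rw [show (t ^ 2) ^ 5 = (t ^ 5) ^ 2 by ring, show (t ^ 2) ^ 6 = (t ^ 6) ^ 2 by ring,
    show (t ^ 2) ^ 3 = (t ^ 3) ^ 2 by ring, ← e1, ← e2, ← e3, div_mul_div_comm]
  congr 1 <;> ring

theorem thetaSeries_eq_mul_cubicProd_neg {t : ℂ} (ht0 : t ≠ 0) (ht : ‖t‖ < 1) :
    thetaSeries (t ^ 3) (t ^ 2) = thetaSeries (t ^ 3) 1 * cubicProd (-t) := by
  have h30 := pow_ne_zero 3 ht0
  have h3 : ‖t ^ 3‖ < 1 := norm_pow_lt_one ht three_ne_zero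
  have hd := cubicProd_denom_ne_zero (t := -t) (by simpa using ht)
  rw [thetaSeries_one h30 h3, thetaSeries_eq_prod h30 h3 (pow_ne_zero 2 ht0), cubicProd,
    show (t ^ 2)⁻¹ * t ^ 3 = t by field_simp, ← pow_mul, ← pow_add]
  simp only [neg_neg, show (-t) ^ 6 = t ^ 6 by ring, show -(-t) ^ 5 = t ^ 5 by ring,
    show -(-t) ^ 3 = t ^ 3 by ring] at hd ⊢
  norm_num
  field_simp

theorem qProd_mul_cubicProd {t : ℂ} (ht : ‖t‖ < 1) :
    qProd t (t ^ 3) * qProd (t ^ 2) (t ^ 3) * cubicProd t = qProd (t ^ 3) (t ^ 3) ^ 2 := by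
  have h3 : ‖t ^ 3‖ < 1 := norm_pow_lt_one ht three_ne_zero
  have h6 : ‖t ^ 6‖ < 1 := norm_pow_lt_one ht (by norm_num)
  have h2 : ‖t ^ 2‖ < 1 := norm_pow_lt_one ht (by norm_num)
  have h4 : ‖t ^ 4‖ < 1 := norm_pow_lt_one ht (by norm_num)
  have e1 := qProd_mul_neg t h3
  have e2 := qProd_mul_neg (t ^ 2) h3
  have s1 := qProd_split (-t) h3
  have s2 := qProd_split (-t ^ 2) h3
  have eu := qProd_euler h3
  rw [show -t * t ^ 3 = -t ^ 4 by ring] at s1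
  rw [show -t ^ 2 * t ^ 3 = -t ^ 5 by ring] at s2
  rw [← pow_mul] at e1 e2 s1 s2 eu
  rw [← pow_mul] at e2
  norm_num at e1 e2 s1 s2 eu
  have n2 : qProd (-t ^ 2) (t ^ 6) ≠ 0 := qProd_ne_zero h6 (by simpa using h2)
  have n4 : qProd (-t ^ 4) (t ^ 6) ≠ 0 := qProd_ne_zero h6 (by simpa using h4)
  have nd := cubicProd_denom_ne_zero ht
  have key : qProd t (t ^ 3) * qProd (t ^ 2) (t ^ 3) *
      (qProd (-t ^ 5) (t ^ 6) * qProd (-t) (t ^ 6)) = 1 := by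
    rw [s1] at e1
    rw [s2] at e2
    apply mul_right_cancel₀ (mul_ne_zero n2 n4)
    rw [one_mul]
    linear_combination
      qProd (t ^ 2) (t ^ 3) * (qProd (-t ^ 2) (t ^ 6) * qProd (-t ^ 5) (t ^ 6)) * e1 +
      qProd (-t ^ 2) (t ^ 6) * e2
  rw [cubicProd, ← mul_div_assoc, key, div_eq_iff (pow_ne_zero _ nd), ← mul_pow, eu, one_pow]

theorem two_mul_thetaSeries_mul_cubicProd {r : ℂ} (hr0 : r ≠ 0) (hr : ‖r‖ < 1) :
    2 * thetaSeries (r ^ 3) r * cubicProd (r ^ 2) = thetaSeries (r ^ 3) (r ^ 3) := by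
  have h30 := pow_ne_zero 3 hr0
  have h3 : ‖r ^ 3‖ < 1 := norm_pow_lt_one hr three_ne_zero
  have h := qProd_mul_cubicProd (norm_pow_lt_one hr two_ne_zero)
  rw [thetaSeries_self h30 h3, thetaSeries_eq_prod h30 h3 hr0,
    show r⁻¹ * r ^ 3 = r ^ 2 by field_simp, show r * r ^ 3 = (r ^ 2) ^ 2 by ring,
    show (r ^ 3) ^ 2 = (r ^ 2) ^ 3 by ring]
  linear_combination 2 * qProd (-(r ^ 2) ^ 3) ((r ^ 2) ^ 3) * h

theorem thetaSeries_one_eq {x : ℂ} (hx0 : x ≠ 0) (hx : ‖x‖ < 1) :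
    thetaSeries x 1 = thetaSeries (x ^ 9) 1 * (1 + 2 * (x * cubicProd (-x ^ 3))) := by
  have h := thetaSeries_eq_mul_cubicProd_neg (pow_ne_zero 3 hx0)
    (norm_pow_lt_one hx three_ne_zero)
  rw [← pow_mul, ← pow_mul] at h
  rw [thetaSeries_one_dissection hx0 hx, h]
  ring

theorem thetaSeries_self_mul_eq {s : ℂ} (hs0 : s ≠ 0) (hs : ‖s‖ < 1) :
    thetaSeries s s * cubicProd (s ^ 6) =
      thetaSeries (s ^ 9) (s ^ 9) * (s ^ 2 * cubicProd (s ^ 6) + 1) := by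
  have h := two_mul_thetaSeries_mul_cubicProd (pow_ne_zero 3 hs0)
    (norm_pow_lt_one hs three_ne_zero)
  rw [← pow_mul, ← pow_mul] at h
  rw [thetaSeries_self_dissection hs0 hs]
  linear_combination h

theorem cubicProd_modular_relation {s : ℂ} (hs0 : s ≠ 0) (hs : ‖s‖ < 1) :
    (s ^ 2 * cubicProd (s ^ 6)) ^ 2 +
      2 * (s ^ 2 * cubicProd (s ^ 6)) * (s ^ 4 * cubicProd (s ^ 12)) ^ 2 -
      s ^ 4 * cubicProd (s ^ 12) = 0 := by
  have hx0 := pow_ne_zero 2 hs0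
  have hx := norm_pow_lt_one hs two_ne_zero
  have h90 := pow_ne_zero 9 hs0
  have h9 : ‖s ^ 9‖ < 1 := norm_pow_lt_one hs (by norm_num)
  have h6 : ‖s ^ 6‖ < 1 := norm_pow_lt_one hs (by norm_num)
  have h1 := thetaSeries_one_eq hx0 hx
  have h2 := thetaSeries_self_mul_eq hs0 hs
  have h2' := thetaSeries_self_mul_eq hx0 hx
  have h3 := two_mul_thetaSeries_one_mul_self hs0 hs
  have h3' := two_mul_thetaSeries_one_mul_self h90 h9
  have hA := cubicProd_mul_neg h6
  have hA0 := cubicProd_ne_zero h6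
  have hn := thetaSeries_self_ne_zero h90 h9
  simp only [← pow_mul] at h1 h2 h2' h3 h3' hA
  norm_num at h1 h2 h2' h3 h3' hA
  generalize cubicProd (s ^ 6) = A at *
  generalize cubicProd (-s ^ 6) = Am at *
  generalize cubicProd (s ^ 12) = B at *
  generalize thetaSeries s s = P at *
  generalize thetaSeries (s ^ 9) (s ^ 9) = P9 at *
  generalize thetaSeries (s ^ 2) (s ^ 2) = R at *
  generalize thetaSeries (s ^ 18) (s ^ 18) = R9 at *
  generalize thetaSeries (s ^ 2) 1 = F at *
  generalize thetaSeries (s ^ 18) 1 = F9 at *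
  subst h1
  have key : (1 + 2 * (s ^ 2 * Am)) * (s ^ 4 * B + 1) * A ^ 2 =
      (s ^ 2 * A + 1) ^ 2 * B := by
    apply mul_left_cancel₀ (pow_ne_zero 2 hn)
    linear_combination (-(1 + 2 * (s ^ 2 * Am)) * (s ^ 4 * B + 1) * A ^ 2) * h3' -
      2 * F9 * (1 + 2 * (s ^ 2 * Am)) * A ^ 2 * h2' + A ^ 2 * B * h3 +
      B * (P * A + P9 * (s ^ 2 * A + 1)) * h2
  linear_combination s ^ 4 * key - 2 * s ^ 6 * A * (s ^ 4 * B + 1) * hA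

/-- For `τ` in the upper half-plane, `u = c(τ)` and `v = c(2τ)` satisfy
`u² + 2uv² − v = 0`. -/
theorem cubicCF_modular_relation (τ : ℂ) (hτ : 0 < τ.im) :
    c τ ^ 2 + 2 * c τ * c (2 * τ) ^ 2 - c (2 * τ) = 0 := by
  set s := Complex.exp (Real.pi * I * τ / 3) with hs_def
  have hs : ‖s‖ < 1 := by
    rw [hs_def, Complex.norm_exp, Real.exp_lt_one_iff]
    have : (Real.pi * I * τ / 3 : ℂ) = ((Real.pi / 3 : ℝ) : ℂ) * (I * τ) := by push_cast; ring
    rw [this, Complex.re_ofReal_mul, Complex.I_mul_re]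
    have := mul_pos (div_pos Real.pi_pos three_pos) hτ
    linarith
  have hn : nome τ = s ^ 6 := by
    rw [nome, hs_def, ← Complex.exp_nat_mul]; congr 1; push_cast; ring
  have hn2 : nome (2 * τ) = s ^ 12 := by
    rw [nome, hs_def, ← Complex.exp_nat_mul]; congr 1; push_cast; ring
  have hu : c τ = s ^ 2 * cubicProd (s ^ 6) := by
    rw [c_eq_cubicProd τ (hn ▸ norm_pow_lt_one hs (by norm_num)), hn]
    congr 1
    rw [hs_def, ← Complex.exp_nat_mul]; congr 1; push_cast; ring
  have hv : c (2 * τ) = s ^ 4 * cubicProd (s ^ 12) := by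
    rw [c_eq_cubicProd (2 * τ) (hn2 ▸ norm_pow_lt_one hs (by norm_num)), hn2]
    congr 1
    rw [hs_def, ← Complex.exp_nat_mul]; congr 1; push_cast; ring
  rw [hu, hv]
  exact cubicProd_modular_relation (Complex.exp_ne_zero _) hs
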